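/- arXiv:2202.01278 — 2 statements merged into one kernel-verified Lean document; each statement's English description precedes it below -/
import Mathlib

section
/- Let m ∈ ℕ, let α ∈ ℝ, and let n ≥ m. Then the polynomial identity x · (d/dx)L^{I,(α)}_{m,n}(x) + α · L^{I,(α)}_{m,n}(x) = (α+n) · L_{n−m}^{(α−1)}(x) · L_m^{(α−1)}(−x) holds for all x. -/
open Finset

/-- Generalized binomial coefficient `C(t, j) = t(t-1)⋯(t-j+1)/j!`. -/
noncomputable def genBinom (t : ℝ) (j : ℕ) : ℝ :=
  (∏ i ∈ Finset.range j, (t - i)) / (Nat.factorial j)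

/-- Generalized Laguerre polynomial `L_n^{(α)}(x)`, with the convention
`L_n^{(α)} = 0` for negative integer index `n`. -/
noncomputable def laguerre (α : ℝ) (n : ℤ) (x : ℝ) : ℝ :=
  if 0 ≤ n then
    ∑ k ∈ Finset.range (n.toNat + 1),
      ((-1 : ℝ) ^ k / (Nat.factorial k)) * genBinom ((n : ℝ) + α) (n.toNat - k) * x ^ k
  else 0

/-- Type-I exceptional `X_m`-Laguerre polynomial. -/
noncomputable def XLagI (m : ℕ) (α : ℝ) (n : ℕ) (x : ℝ) : ℝ :=
  laguerre α (m : ℤ) (-x) * laguerre (α - 1) ((n : ℤ) - m) x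
    + laguerre (α - 1) (m : ℤ) (-x) * laguerre α ((n : ℤ) - m - 1) x

noncomputable def lagN (a : ℝ) (n : ℕ) (x : ℝ) : ℝ :=
  ∑ k ∈ Finset.range (n + 1),
      ((-1 : ℝ) ^ k / (Nat.factorial k)) * genBinom ((n : ℝ) + a) (n - k) * x ^ k

lemma laguerre_nat (a : ℝ) (n : ℕ) : laguerre a (n : ℤ) = lagN a n := by
  funext x
  simp [laguerre, lagN]

lemma genBinom_absorb (t : ℝ) (r : ℕ) :
    ((r : ℝ) + 1) * genBinom t (r + 1) = t * genBinom (t - 1) r := by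
  unfold genBinom
  rw [Finset.prod_range_succ', Nat.factorial_succ]
  have h : ∏ i ∈ Finset.range r, (t - ((i + 1 : ℕ) : ℝ)) = ∏ i ∈ Finset.range r, (t - 1 - i) := by
    apply Finset.prod_congr rfl
    intro i _
    push_cast
    ring
  rw [h]
  have : ((Nat.factorial r : ℕ) : ℝ) ≠ 0 := by positivity
  have : (r : ℝ) + 1 ≠ 0 := by positivity
  push_cast
  field_simp
  simp [mul_comm]

lemma genBinom_top (t : ℝ) (r : ℕ) :
    ((r : ℝ) + 1) * genBinom t (r + 1) = (t - r) * genBinom t r := by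
  unfold genBinom
  rw [Finset.prod_range_succ, Nat.factorial_succ]
  have : ((Nat.factorial r : ℕ) : ℝ) ≠ 0 := by positivity
  have : (r : ℝ) + 1 ≠ 0 := by positivity
  push_cast
  field_simp

lemma genBinom_zero (t : ℝ) : genBinom t 0 = 1 := by simp [genBinom]

lemma genBinom_pascal (t : ℝ) (r : ℕ) :
    genBinom t (r + 1) = genBinom (t - 1) r + genBinom (t - 1) (r + 1) := by
  have h1 := genBinom_absorb t r
  have h2 := genBinom_top (t - 1) r
  have : (r : ℝ) + 1 ≠ 0 := by positivity
  apply mul_left_cancel₀ this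
  linarith

lemma lagN_deriv (a : ℝ) (n : ℕ) (x : ℝ) :
    HasDerivAt (lagN a n) (∑ k ∈ Finset.range (n + 1),
      ((-1 : ℝ) ^ k / (Nat.factorial k)) * genBinom ((n : ℝ) + a) (n - k)
        * ((k : ℝ) * x ^ (k - 1))) x := by
  unfold lagN
  apply HasDerivAt.fun_sum
  intro k _
  exact (hasDerivAt_pow k x).const_mul _

lemma lagN_zero (a x : ℝ) : lagN a 0 x = 1 := by simp [lagN, genBinom]

lemma lagN_deriv_succ (a : ℝ) (n : ℕ) (x : ℝ) :
    HasDerivAt (lagN a (n + 1)) (-lagN (a + 1) n x) x := by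
  convert lagN_deriv a (n + 1) x using 1
  rw [Finset.sum_range_succ']
  simp only [Nat.cast_zero, zero_mul, mul_zero, add_zero]
  unfold lagN
  rw [← Finset.sum_neg_distrib]
  apply Finset.sum_congr rfl
  intro k _
  have e : n + 1 - (k + 1) = n - k := by omega
  have e2 : ((n + 1 : ℕ) : ℝ) + a = n + (a + 1) := by push_cast; ring
  rw [e, e2, Nat.factorial_succ]
  have : ((Nat.factorial k : ℕ) : ℝ) ≠ 0 := by positivity
  have : (k : ℝ) + 1 ≠ 0 := by positivity
  push_cast
  field_simp
  ring

lemma lagN_rec (a : ℝ) (n : ℕ) (x : ℝ) :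
    -x * lagN (a + 1) n x + (n + 1 + a) * lagN a n x = (n + 1) * lagN a (n + 1) x := by
  have h := (lagN_deriv_succ a n x).unique (lagN_deriv a (n + 1) x)
  have h' : -x * lagN (a + 1) n x = x * -lagN (a + 1) n x := by ring
  rw [h', h]
  unfold lagN
  rw [Finset.sum_range_succ, mul_add, Finset.sum_range_succ _ (n + 1), mul_add]
  have hs : x * ∑ k ∈ Finset.range (n + 1), ((-1 : ℝ) ^ k / (Nat.factorial k)) *
      genBinom (((n + 1 : ℕ) : ℝ) + a) (n + 1 - k) * ((k : ℝ) * x ^ (k - 1)) +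
      (n + 1 + a) * ∑ k ∈ Finset.range (n + 1),
      ((-1 : ℝ) ^ k / (Nat.factorial k)) * genBinom ((n : ℝ) + a) (n - k) * x ^ k =
      (n + 1) * ∑ k ∈ Finset.range (n + 1), ((-1 : ℝ) ^ k / (Nat.factorial k)) *
      genBinom (((n + 1 : ℕ) : ℝ) + a) (n + 1 - k) * x ^ k := by
    rw [Finset.mul_sum, Finset.mul_sum, Finset.mul_sum, ← Finset.sum_add_distrib]
    apply Finset.sum_congr rfl
    intro k hk
    obtain ⟨r, rfl⟩ := Nat.exists_eq_add_of_le (Nat.lt_succ_iff.mp (Finset.mem_range.mp hk))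
    have e : k + r + 1 - k = r + 1 := by omega
    have e1 : k + r - k = r := by omega
    have hb := genBinom_absorb (((k + r + 1 : ℕ) : ℝ) + a) r
    have e2 : ((k + r + 1 : ℕ) : ℝ) + a - 1 = ((k + r : ℕ) : ℝ) + a := by push_cast; ring
    rw [e2] at hb
    rw [e, e1]
    have hx : x * ((k : ℝ) * x ^ (k - 1)) = k * x ^ k := by
      cases k with
      | zero => simp
      | succ k => simp only [Nat.add_sub_cancel]; ring
    have e3 : (((k + r : ℕ) : ℝ) + 1 + a) = ((k + r + 1 : ℕ) : ℝ) + a := by push_cast; ring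
    rw [e3]
    have e4 : ((k + r : ℕ) : ℝ) + 1 = k + (r + 1) := by push_cast; ring
    rw [e4]
    linear_combination ((-1 : ℝ) ^ k / (Nat.factorial k)) *
      genBinom (((k + r + 1 : ℕ) : ℝ) + a) (r + 1) * hx
      - ((-1 : ℝ) ^ k / (Nat.factorial k)) * x ^ k * hb
  rw [← hs]
  simp only [Nat.add_sub_cancel]
  push_cast
  ring

lemma lagN_pascal (a : ℝ) (n : ℕ) (x : ℝ) :
    lagN a (n + 1) x = lagN a n x + lagN (a - 1) (n + 1) x := by
  unfold lagN
  rw [Finset.sum_range_succ, Finset.sum_range_succ _ (n + 1), ← add_assoc,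
    ← Finset.sum_add_distrib]
  congr 1
  · apply Finset.sum_congr rfl
    intro k hk
    obtain ⟨r, rfl⟩ := Nat.exists_eq_add_of_le (Nat.lt_succ_iff.mp (Finset.mem_range.mp hk))
    have e : k + r + 1 - k = r + 1 := by omega
    have e1 : k + r - k = r := by omega
    have hb := genBinom_pascal (((k + r + 1 : ℕ) : ℝ) + a) r
    have e2 : ((k + r + 1 : ℕ) : ℝ) + a - 1 = ((k + r : ℕ) : ℝ) + a := by push_cast; ring
    have e3 : ((k + r + 1 : ℕ) : ℝ) + (a - 1) = ((k + r : ℕ) : ℝ) + a := by push_cast; ring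
    rw [e2] at hb
    rw [e, e1, e3, hb]
    ring
  · simp [genBinom_zero]

/-- Derivative facts packaged for all degrees (including zero). -/
lemma lagN_pack (α : ℝ) (m : ℕ) (y : ℝ) :
    ∃ a' c' : ℝ, HasDerivAt (lagN α m) a' y ∧ HasDerivAt (lagN (α - 1) m) c' y ∧
      y * a' + α * lagN α m y = (m + α) * lagN (α - 1) m y ∧
      -c' - lagN α m y = - lagN (α - 1) m y := by
  cases m with
  | zero =>
    have h (b : ℝ) : HasDerivAt (lagN b 0) 0 y := by
      have : lagN b 0 = fun _ => 1 := by funext z; exact lagN_zero b z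
      rw [this]
      exact hasDerivAt_const _ _
    exact ⟨0, 0, h _, h _, by simp [lagN_zero], by simp [lagN_zero]⟩
  | succ m =>
    refine ⟨_, _, lagN_deriv_succ α m y, lagN_deriv_succ (α - 1) m y, ?_, ?_⟩
    · have h1 := lagN_rec α m y
      have h2 := lagN_pascal α m y
      push_cast
      linear_combination h1 + (m + 1 + α) * h2
    · have h2 := lagN_pascal α m y
      rw [sub_add_cancel]
      linarith

theorem stmt2 (m : ℕ) (α : ℝ) (n : ℕ) (hmn : m ≤ n) :
    ∀ x : ℝ,
      x * deriv (XLagI m α n) x + α * XLagI m α n x =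
        (α + n) * laguerre (α - 1) ((n : ℤ) - m) x * laguerre (α - 1) (m : ℤ) (-x) := by
  intro x
  obtain ⟨j, rfl⟩ := Nat.exists_eq_add_of_le hmn
  obtain ⟨a', c', hA, hC, h1, h2⟩ := lagN_pack α m (-x)
  have hA' := HasDerivAt.comp x hA (hasDerivAt_neg x)
  have hC' := HasDerivAt.comp x hC (hasDerivAt_neg x)
  have ej : ((m + j : ℕ) : ℤ) - m = (j : ℤ) := by push_cast; ring
  cases j with
  | zero =>
    have hf : XLagI m α (m + 0) = lagN α m ∘ Neg.neg := by
      funext z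
      simp only [XLagI, ej, laguerre_nat, lagN_zero]
      simp [laguerre]
    rw [hf, ej, hA'.deriv]
    simp only [laguerre_nat, lagN_zero, Function.comp]
    push_cast
    linear_combination h1
  | succ j =>
    have ej' : ((m + (j + 1) : ℕ) : ℤ) - m - 1 = (j : ℤ) := by push_cast; ring
    have hf : XLagI m α (m + (j + 1)) = fun z => (lagN α m ∘ Neg.neg) z * lagN (α - 1) (j + 1) z
        + (lagN (α - 1) m ∘ Neg.neg) z * lagN α j z := by
      funext z
      unfold XLagI
      rw [ej', ej]
      simp only [laguerre_nat, Function.comp]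
    obtain ⟨d', e', hD, -, h3, -⟩ := lagN_pack α j x
    have hB := lagN_deriv_succ (α - 1) j x
    rw [sub_add_cancel] at hB
    have hr := lagN_rec (α - 1) j x
    rw [sub_add_cancel] at hr
    rw [hf, ej, ((hA'.fun_mul hB).fun_add (hC'.fun_mul hD)).deriv]
    simp only [laguerre_nat, Function.comp]
    push_cast
    linear_combination lagN (α - 1) (j + 1) x * h1 + x * lagN α j x * h2 +
      lagN (α - 1) m (-x) * h3 + lagN (α - 1) m (-x) * hr
end

section
/- Let m ∈ ℕ, let α > m−1, and let n ≥ m. Let y_1,…,y_m ∈ ℂ list the roots of L_m^{(−α−1)} with multiplicity, i.e., L_m^{(−α−1)}(X) = ((−1)^m/m!)·∏_{j=1}^m (X−y_j), and let z_1,…,z_{n−m} ∈ ℂ list the roots of L_{n−m}^{(α+1)} with multiplicity similarly. Set Y_j = y_j for 1 ≤ j ≤ m and Y_{m+j} = z_j for 1 ≤ j ≤ n−m. For x ∈ ℂ let M(x) be the (n+1)×(n+1) matrix whose j-th row, for 1 ≤ j ≤ n, is (1, Y_j, Y_j², …, Y_j^n), and whose last row is (E_0(x), 1!·E_1(x), 2!·E_2(x),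 …, n!·E_n(x)). Then for every x ∈ ℂ, m!·(n−m)!·(∏_{1≤i<j≤n}(Y_j−Y_i))·L^{II,(α)}_{m,n}(x) = (−1)^{n+1}·(α+n+1−2m)·det M(x); moreover the points Y_1,…,Y_n are pairwise distinct, so the Vandermonde factor is nonzero. -/
open Finset

/-- Generalized Laguerre polynomial `L_n^{(α)}(x)` evaluated at complex `x`,
with the convention `L_n^{(α)} = 0` for negative integer index `n`. -/
noncomputable def laguerreC (α : ℝ) (n : ℤ) (x : ℂ) : ℂ :=
  if 0 ≤ n then
    ∑ k ∈ Finset.range (n.toNat + 1),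
      ((-1 : ℂ) ^ k / (Nat.factorial k)) * (genBinom ((n : ℝ) + α) (n.toNat - k) : ℂ) * x ^ k
  else 0

/-- Type-II exceptional `X_m`-Laguerre polynomial (complex variable). -/
noncomputable def XLagIIC (m : ℕ) (α : ℝ) (n : ℕ) (x : ℂ) : ℂ :=
  x * laguerreC (-α - 1) (m : ℤ) x * laguerreC (α + 2) ((n : ℤ) - m - 1) x
    + ((m : ℂ) - (α : ℂ) - 1) * laguerreC (-α - 2) (m : ℤ) x * laguerreC (α + 1) ((n : ℤ) - m) x

/-- Partial sums of the exponential series: `E_k(x) = ∑_{j=0}^k x^j/j!`. -/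
noncomputable def expPartial (k : ℕ) (x : ℂ) : ℂ :=
  ∑ j ∈ Finset.range (k + 1), x ^ j / (Nat.factorial j)


section helpers

theorem genBinom_succ (t : ℝ) (j : ℕ) :
    ((j : ℝ) + 1) * genBinom t (j + 1) = (t - j) * genBinom t j := by
  unfold genBinom
  rw [Finset.prod_range_succ, Nat.factorial_succ]
  have : (Nat.factorial j : ℝ) ≠ 0 := by positivity
  push_cast
  field_simp

theorem genBinom_succ' (t : ℝ) (j : ℕ) :
    ((j : ℝ) + 1) * genBinom t (j + 1) = t * genBinom (t - 1) j := by
  unfold genBinom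
  rw [Finset.prod_range_succ', Nat.factorial_succ]
  have : (Nat.factorial j : ℝ) ≠ 0 := by positivity
  have h : ∀ i : ℕ, t - ((i + 1 : ℕ) : ℝ) = t - 1 - i := by intro i; push_cast; ring
  simp only [h]
  push_cast
  field_simp
  ring

theorem genBinom_shift (t : ℝ) (j : ℕ) :
    (t - j) * genBinom t j = t * genBinom (t - 1) j := by
  rw [← genBinom_succ, genBinom_succ']

/-- coefficients of the Laguerre polynomial -/
noncomputable def lagCoeff (a : ℝ) (n k : ℕ) : ℝ :=
  if k ≤ n then (-1) ^ k / (Nat.factorial k) * genBinom (n + a) (n - k) else 0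

theorem lagCoeff_self (a : ℝ) (n : ℕ) : lagCoeff a n n = (-1) ^ n / (Nat.factorial n) := by
  simp [lagCoeff, genBinom]

theorem lagCoeff_gt (a : ℝ) (n k : ℕ) (h : n < k) : lagCoeff a n k = 0 := by
  simp [lagCoeff, h]

theorem lagCoeff_R1 (a : ℝ) (n i : ℕ) :
    ((n : ℝ) + 1 - i) * lagCoeff a (n + 1) i = (n + 1 + a) * lagCoeff a n i := by
  rcases lt_trichotomy i (n + 1) with h | h | h
  · obtain ⟨d, rfl⟩ : ∃ d, n = i + d := ⟨n - i, by omega⟩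
    have h1 := genBinom_succ' (((i + d : ℕ) : ℝ) + 1 + a) d
    have e1 : i + d + 1 - i = d + 1 := by omega
    have e2 : i + d - i = d := by omega
    have e3 : ((i + d : ℕ) : ℝ) + 1 + a - 1 = ((i + d : ℕ) : ℝ) + a := by ring
    rw [e3] at h1
    simp only [lagCoeff, e1, e2, if_pos (show i ≤ i + d + 1 by omega), if_pos (show i ≤ i + d by omega)]
    push_cast at h1 ⊢
    linear_combination ((-1) ^ i / (Nat.factorial i : ℝ)) * h1
  · subst h
    simp [lagCoeff_gt]
  · rw [lagCoeff_gt _ _ _ h, lagCoeff_gt _ _ _ (by omega)]; simp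

theorem lagCoeff_R2 (a : ℝ) (n i : ℕ) :
    ((i : ℝ) + 1) * (i + 1 + a) * lagCoeff a n (i + 1) = - (n - i) * lagCoeff a n i := by
  rcases lt_trichotomy i n with h | h | h
  · obtain ⟨d, rfl⟩ : ∃ d, n = i + 1 + d := ⟨n - (i + 1), by omega⟩
    have h1 := genBinom_succ (((i + 1 + d : ℕ) : ℝ) + a) d
    have e1 : i + 1 + d - (i + 1) = d := by omega
    have e2 : i + 1 + d - i = d + 1 := by omega
    simp only [lagCoeff, e1, e2, if_pos (show i ≤ i + 1 + d by omega),
      if_pos (show i + 1 ≤ i + 1 + d by omega), Nat.factorial_succ]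
    have : (Nat.factorial i : ℝ) ≠ 0 := by positivity
    push_cast at h1 ⊢
    field_simp
    rw [pow_succ]
    linear_combination ((-1) ^ i) * h1
  · subst h
    simp [lagCoeff_gt]
  · rw [lagCoeff_gt _ _ _ h, lagCoeff_gt _ _ _ (by omega)]; simp

theorem lagCoeff_D (a : ℝ) (n i : ℕ) :
    ((i : ℝ) + 1) * lagCoeff a (n + 1) (i + 1) = - lagCoeff (a + 1) n i := by
  by_cases h : i ≤ n
  · have e : ((n + 1 : ℕ) : ℝ) + a = n + (a + 1) := by push_cast; ring
    have e2 : n + 1 - (i + 1) = n - i := by omega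
    simp only [lagCoeff, if_pos h, if_pos (show i + 1 ≤ n + 1 by omega), e, e2, Nat.factorial_succ]
    have : (Nat.factorial i : ℝ) ≠ 0 := by positivity
    push_cast
    field_simp
    ring
  · rw [lagCoeff_gt _ _ _ (by omega), lagCoeff_gt _ _ _ (by omega)]; simp

theorem lagCoeff_shift (a : ℝ) (n i : ℕ) :
    ((n : ℝ) + a) * lagCoeff (a - 1) n i = (i + a) * lagCoeff a n i := by
  by_cases h : i ≤ n
  · have h1 := genBinom_shift ((n : ℝ) + a) (n - i)
    have e : (n : ℝ) + (a - 1) = n + a - 1 := by ring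
    rw [Nat.cast_sub h] at h1
    simp only [lagCoeff, if_pos h, e]
    linear_combination -((-1) ^ i / (Nat.factorial i : ℝ)) * h1
  · rw [lagCoeff_gt _ _ _ (by omega), lagCoeff_gt _ _ _ (by omega)]; simp

theorem lagCoeff_three_zero (a : ℝ) (k : ℕ) :
    ((k : ℝ) + 2) * lagCoeff a (k + 2) 0
      = (2 * k + 3 + a) * lagCoeff a (k + 1) 0 - (k + 1 + a) * lagCoeff a k 0 := by
  have h1 := lagCoeff_R1 a k 0
  have h2 := lagCoeff_R1 a (k + 1) 0
  push_cast at h1 h2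
  linear_combination h2 - h1

theorem lagCoeff_three_succ (a : ℝ) (k i : ℕ) :
    ((k : ℝ) + 2) * lagCoeff a (k + 2) (i + 1)
      = (2 * k + 3 + a) * lagCoeff a (k + 1) (i + 1) - lagCoeff a (k + 1) i
        - (k + 1 + a) * lagCoeff a k (i + 1) := by
  by_cases h : i = k + 1
  · subst h
    rw [lagCoeff_gt a (k + 1) _ (by omega), lagCoeff_gt a k _ (by omega), lagCoeff_self,
      show k + 1 + 1 = k + 2 from rfl, lagCoeff_self, Nat.factorial_succ (k + 1)]
    have : (Nat.factorial (k + 1) : ℝ) ≠ 0 := by positivity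
    push_cast
    have h2 : (k : ℝ) + 1 + 1 ≠ 0 := by positivity
    field_simp
    ring
  · have hne : (k : ℝ) + 1 - i ≠ 0 := by
      intro h0
      apply h
      have : (i : ℝ) = ((k + 1 : ℕ) : ℝ) := by push_cast; linarith
      exact_mod_cast this
    have h1 := lagCoeff_R1 a k (i + 1)
    have h2 := lagCoeff_R1 a (k + 1) (i + 1)
    have h3 := lagCoeff_R2 a (k + 1) i
    push_cast at h1 h2 h3
    apply mul_left_cancel₀ hne
    linear_combination (k + 2 : ℝ) * h2 - (k + 1 - i : ℝ) * h1 + h3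

/-- Laguerre polynomial as a polynomial -/
noncomputable def lagPoly (a : ℝ) (n : ℕ) : Polynomial ℂ :=
  ∑ k ∈ Finset.range (n + 1), Polynomial.monomial k (lagCoeff a n k : ℂ)

theorem lagPoly_coeff (a : ℝ) (n i : ℕ) : (lagPoly a n).coeff i = (lagCoeff a n i : ℂ) := by
  simp only [lagPoly, Polynomial.finsetSum_coeff, Polynomial.coeff_monomial]
  rw [Finset.sum_ite_eq']
  split_ifs with h
  · rfl
  · rw [lagCoeff_gt _ _ _ (by simpa using h)]; simp

theorem laguerreC_eq (a : ℝ) (n : ℕ) (x : ℂ) : laguerreC a (n : ℤ) x = (lagPoly a n).eval x := by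
  simp only [laguerreC, lagPoly, Polynomial.eval_finsetSum, Polynomial.eval_monomial]
  rw [if_pos (by positivity)]
  simp only [Int.toNat_natCast, Int.cast_natCast]
  refine Finset.sum_congr rfl fun k hk => ?_
  rw [lagCoeff, if_pos (by simpa [Nat.lt_succ_iff] using hk)]
  push_cast
  ring

theorem lagPoly_zero (a : ℝ) : lagPoly a 0 = 1 := by
  simp [lagPoly, lagCoeff, genBinom]

theorem lagPoly_deriv (a : ℝ) (n : ℕ) :
    Polynomial.derivative (lagPoly a (n + 1)) = - lagPoly (a + 1) n := by
  ext i
  rw [Polynomial.coeff_derivative, Polynomial.coeff_neg, lagPoly_coeff, lagPoly_coeff]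
  have := lagCoeff_D a n i
  rw [mul_comm]
  exact_mod_cast this

theorem lagPoly_shift (a : ℝ) (n : ℕ) :
    Polynomial.C ((n : ℂ) + a) * lagPoly (a - 1) n
      = Polynomial.X * Polynomial.derivative (lagPoly a n) + Polynomial.C (a : ℂ) * lagPoly a n := by
  ext i
  have h := lagCoeff_shift a n i
  have h' : ((n : ℂ) + a) * (lagCoeff (a - 1) n i : ℂ) = (i + a) * (lagCoeff a n i : ℂ) := by
    exact_mod_cast h
  rcases i with _ | i
  · simp [lagPoly_coeff] at h' ⊢
    linear_combination h'
  · simp only [Polynomial.coeff_add, Polynomial.coeff_C_mul, Polynomial.coeff_X_mul,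
      Polynomial.coeff_derivative, lagPoly_coeff]
    push_cast at h'
    linear_combination h'

theorem lagPoly_ode (a : ℝ) (n : ℕ) :
    Polynomial.X * Polynomial.derivative (Polynomial.derivative (lagPoly a n))
      + (Polynomial.C ((a : ℂ) + 1) - Polynomial.X) * Polynomial.derivative (lagPoly a n)
      + Polynomial.C (n : ℂ) * lagPoly a n = 0 := by
  ext i
  have h := lagCoeff_R2 a n i
  have h' : ((i : ℂ) + 1) * (i + 1 + a) * (lagCoeff a n (i + 1) : ℂ)
      = - (n - i) * (lagCoeff a n i : ℂ) := by
    exact_mod_cast h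
  rcases i with _ | i
  · simp only [sub_mul, Polynomial.coeff_add, Polynomial.coeff_sub, Polynomial.coeff_C_mul,
      Polynomial.mul_coeff_zero, Polynomial.coeff_X_zero, Polynomial.coeff_C_zero,
      Polynomial.coeff_derivative, lagPoly_coeff, Polynomial.coeff_zero]
    push_cast at h' ⊢
    linear_combination h'
  · simp only [sub_mul, Polynomial.coeff_add, Polynomial.coeff_sub, Polynomial.coeff_C_mul,
      Polynomial.coeff_X_mul,
      Polynomial.coeff_derivative, lagPoly_coeff, Polynomial.coeff_zero]
    push_cast at h' ⊢
    linear_combination h'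

theorem lagPoly_three (a : ℝ) (k : ℕ) :
    Polynomial.C ((k : ℂ) + 2) * lagPoly a (k + 2)
      = (Polynomial.C (2 * k + 3 + a : ℂ) - Polynomial.X) * lagPoly a (k + 1)
        - Polynomial.C (k + 1 + a : ℂ) * lagPoly a k := by
  ext i
  rcases i with _ | i
  · have h := lagCoeff_three_zero a k
    simp only [sub_mul, Polynomial.coeff_sub, Polynomial.coeff_C_mul,
      Polynomial.mul_coeff_zero, Polynomial.coeff_X_zero, Polynomial.coeff_C_zero, lagPoly_coeff]
    rw [zero_mul, sub_zero]
    exact_mod_cast h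
  · have h := lagCoeff_three_succ a k i
    simp only [sub_mul, Polynomial.coeff_sub, Polynomial.coeff_C_mul,
      Polynomial.coeff_X_mul, lagPoly_coeff]
    exact_mod_cast h

theorem lagPoly_im (a : ℝ) (ha : 0 < a) (z : ℂ) (hz : z.im ≠ 0) (k : ℕ) :
    z.im * ((lagPoly a (k + 1)).eval z * (starRingEnd ℂ) ((lagPoly a k).eval z)).im < 0 := by
  induction k with
  | zero =>
    have h1 : (lagPoly a 1).eval z = 1 + a - z := by
      simp [lagPoly, Finset.sum_range_succ, lagCoeff, genBinom]; ring
    rw [lagPoly_zero, zero_add, h1]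
    have : 0 < z.im ^ 2 := by positivity
    simp
    nlinarith
  | succ k ih =>
    have h := congrArg (Polynomial.eval z) (lagPoly_three a k)
    simp only [Polynomial.eval_mul, Polynomial.eval_sub, Polynomial.eval_C, Polynomial.eval_X] at h
    rw [show k + 1 + 1 = k + 2 from rfl]
    generalize (lagPoly a (k + 2)).eval z = u at *
    generalize (lagPoly a (k + 1)).eval z = v at *
    generalize (lagPoly a k).eval z = w at *
    have hre := congrArg Complex.re h
    have him := congrArg Complex.im h
    simp at hre him ih ⊢
    have hk : (0 : ℝ) ≤ k := Nat.cast_nonneg k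
    have key : ((k : ℝ) + 2) * (z.im * (-(u.re * v.im) + u.im * v.re))
        = - z.im ^ 2 * (v.re ^ 2 + v.im ^ 2)
          + (k + 1 + a) * (z.im * (-(v.re * w.im) + v.im * w.re)) := by
      linear_combination z.im * v.re * him - z.im * v.im * hre
    have h1 : (k + 1 + a) * (z.im * (-(v.re * w.im) + v.im * w.re)) < 0 :=
      mul_neg_of_pos_of_neg (by positivity) ih
    have h2 : 0 ≤ z.im ^ 2 * (v.re ^ 2 + v.im ^ 2) := by positivity
    by_contra hcon
    push Not at hcon
    have h3 := mul_nonneg (show (0 : ℝ) ≤ k + 2 by positivity) hcon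
    linarith

theorem lagPoly_root_im (a : ℝ) (ha : 0 < a) (z : ℂ) (k : ℕ)
    (h : (lagPoly a k).eval z = 0) : z.im = 0 := by
  by_contra hz
  rcases k with _ | k
  · simp [lagPoly_zero] at h
  · have := lagPoly_im a ha z hz k
    simp [h] at this

theorem lagPoly_eval_real (a : ℝ) (n : ℕ) (r : ℝ) :
    (lagPoly a n).eval (r : ℂ) = ((∑ k ∈ Finset.range (n + 1), lagCoeff a n k * r ^ k : ℝ) : ℂ) := by
  simp [lagPoly, Polynomial.eval_finsetSum]

theorem genBinom_pos (t : ℝ) (j : ℕ) (h : (j : ℝ) < t + 1) : 0 < genBinom t j := by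
  unfold genBinom
  apply div_pos _ (by positivity)
  apply Finset.prod_pos
  intro i hi
  have : ((i + 1 : ℕ) : ℝ) ≤ j := by exact_mod_cast Finset.mem_range.mp hi
  push_cast at this
  linarith

theorem genBinom_neg (t : ℝ) (j : ℕ) (h : t < 0) : 0 < (-1) ^ j * genBinom t j := by
  unfold genBinom
  rw [← mul_div_assoc]
  apply div_pos _ (by positivity)
  rw [← Finset.card_range j, ← Finset.prod_const, Finset.card_range, ← Finset.prod_mul_distrib]
  apply Finset.prod_pos
  intro i hi
  have : (0 : ℝ) ≤ i := Nat.cast_nonneg i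
  linarith

theorem lagPoly_ne_nonpos (a : ℝ) (ha : 0 < a) (n : ℕ) (r : ℝ) (hr : r ≤ 0) :
    (lagPoly a n).eval (r : ℂ) ≠ 0 := by
  rw [lagPoly_eval_real]
  norm_cast
  apply ne_of_gt
  have hk : ∀ k ≤ n, lagCoeff a n k * r ^ k
      = (-r) ^ k / (Nat.factorial k) * genBinom (n + a) (n - k) := by
    intro k hk
    rw [lagCoeff, if_pos hk, neg_pow r]; ring
  have hp : ∀ k ≤ n, 0 < genBinom (n + a) (n - k) := by
    intro k hk
    apply genBinom_pos
    rw [Nat.cast_sub hk]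
    have : (0 : ℝ) ≤ k := Nat.cast_nonneg k
    linarith
  apply Finset.sum_pos'
  · intro k hkm
    have hkn : k ≤ n := by simpa [Nat.lt_succ_iff] using hkm
    rw [hk k hkn]
    have := hp k hkn
    have h2 : 0 ≤ -r := by linarith
    positivity
  · refine ⟨0, by simp, ?_⟩
    rw [hk 0 (by omega)]
    have := hp 0 (by omega)
    simpa using this

theorem lagPoly_ne_nonneg (a : ℝ) (n : ℕ) (ha : n + a < 0) (r : ℝ) (hr : 0 ≤ r) :
    (lagPoly a n).eval (r : ℂ) ≠ 0 := by
  rw [lagPoly_eval_real]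
  norm_cast
  suffices h : 0 < (-1) ^ n * ∑ k ∈ Finset.range (n + 1), lagCoeff a n k * r ^ k by
    intro h0; rw [h0] at h; simp at h
  rw [Finset.mul_sum]
  have hk : ∀ k ≤ n, (-1) ^ n * (lagCoeff a n k * r ^ k)
      = r ^ k / (Nat.factorial k) * ((-1) ^ (n - k) * genBinom (n + a) (n - k)) := by
    intro k hk
    obtain ⟨d, rfl⟩ := Nat.exists_eq_add_of_le hk
    have e : k + d - k = d := by omega
    rw [lagCoeff, if_pos hk, e, pow_add]
    have : ((-1 : ℝ) ^ k) * (-1) ^ k = 1 := by rw [← mul_pow]; simp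
    linear_combination ((-1) ^ d / (Nat.factorial k : ℝ) * genBinom ((k + d : ℕ) + a) d * r ^ k) * this
  have hp : ∀ k, 0 < (-1) ^ (n - k) * genBinom (n + a) (n - k) := fun k => genBinom_neg _ _ ha
  apply Finset.sum_pos'
  · intro k hkm
    have hkn : k ≤ n := by simpa [Nat.lt_succ_iff] using hkm
    rw [hk k hkn]
    have := hp k
    positivity
  · refine ⟨0, by simp, ?_⟩
    rw [hk 0 (by omega)]
    simpa using hp 0

theorem lagPoly_simple (n : ℕ) : ∀ (a : ℝ) (r : ℂ), r ≠ 0 → (lagPoly a n).eval r = 0 →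
    (Polynomial.derivative (lagPoly a n)).eval r ≠ 0 := by
  induction n with
  | zero => intro a r _ h; simp [lagPoly_zero] at h
  | succ n ih =>
    intro a r hr h h'
    have ho := congrArg (Polynomial.eval r) (lagPoly_ode a (n + 1))
    simp only [Polynomial.eval_add, Polynomial.eval_mul, h, h', Polynomial.eval_X, mul_zero,
      add_zero, Polynomial.eval_zero, mul_eq_zero, hr, false_or] at ho
    rw [lagPoly_deriv] at h' ho
    simp only [Polynomial.derivative_neg, Polynomial.eval_neg, neg_eq_zero] at h' ho
    exact ih (a + 1) r hr h' ho

theorem coprime_of_no_root (p q : Polynomial ℂ)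
    (h : ∀ r : ℂ, p.eval r = 0 → q.eval r ≠ 0) : IsCoprime p q := by
  rw [Polynomial.isCoprime_iff_aeval_ne_zero_of_isAlgClosed ℂ ℂ]
  intro r
  by_cases hp : p.eval r = 0
  · right; simpa [Polynomial.aeval_def] using h r hp
  · left; simpa [Polynomial.aeval_def] using hp

theorem lagPoly_separable (a : ℝ) (n : ℕ) (h0 : (lagPoly a n).eval 0 ≠ 0) :
    (lagPoly a n).Separable := by
  apply coprime_of_no_root
  intro r hr
  apply lagPoly_simple n a r _ hr
  rintro rfl
  exact h0 hr

/-- the inverse of `1 - D`, evaluated at `w` -/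
noncomputable def expFun (w : ℂ) : Polynomial ℂ →ₗ[ℂ] ℂ :=
  Polynomial.lsum fun k => LinearMap.mulRight ℂ ((Nat.factorial k : ℂ) * expPartial k w)

theorem expFun_monomial (w : ℂ) (k : ℕ) (c : ℂ) :
    expFun w (Polynomial.monomial k c) = c * ((Nat.factorial k : ℂ) * expPartial k w) := by
  simp [expFun, Polynomial.lsum_apply, mul_assoc]

theorem expFun_sub_deriv (w : ℂ) (G : Polynomial ℂ) :
    expFun w (G - Polynomial.derivative G) = G.eval w := by
  induction G using Polynomial.induction_on' with
  | add p q hp hq =>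
    rw [Polynomial.derivative_add, add_sub_add_comm, map_add, hp, hq, Polynomial.eval_add]
  | monomial k c =>
    rw [map_sub, Polynomial.derivative_monomial, expFun_monomial, expFun_monomial,
      Polynomial.eval_monomial]
    rcases k with _ | k
    · simp [expPartial]
    · have e : k + 1 - 1 = k := rfl
      rw [e, expPartial, Finset.sum_range_succ, ← expPartial, Nat.factorial_succ]
      have : (Nat.factorial k : ℂ) ≠ 0 := by exact_mod_cast Nat.factorial_ne_zero k
      have : (k : ℂ) + 1 ≠ 0 := by exact_mod_cast Nat.succ_ne_zero k
      push_cast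
      field_simp
      ring

theorem expFun_eq_sum (w : ℂ) (n : ℕ) (P : Polynomial ℂ) (h : P.natDegree < n) :
    expFun w P = ∑ k : Fin n, P.coeff k * ((Nat.factorial (k : ℕ) : ℂ) * expPartial k w) := by
  conv_lhs => rw [P.as_sum_range' n h]
  rw [map_sum, Finset.sum_range]
  simp [expFun_monomial]

theorem det_eq (n : ℕ) (Y : Fin n → ℂ) (f : ℕ → ℂ) (P : Polynomial ℂ)
    (hP : P = ∏ j, (Polynomial.X - Polynomial.C (Y j))) :
    (Matrix.of fun (i k : Fin (n + 1)) =>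
      if h : (i : ℕ) < n then (Y ⟨i, h⟩) ^ (k : ℕ) else f k).det
    = (∏ i : Fin n, ∏ j ∈ Finset.Ioi i, (Y j - Y i)) * ∑ k : Fin (n + 1), P.coeff k * f k := by
  set A : Matrix (Fin (n + 1)) (Fin (n + 1)) ℂ := Matrix.of fun (i k : Fin (n + 1)) =>
      if h : (i : ℕ) < n then (Y ⟨i, h⟩) ^ (k : ℕ) else f k with hA
  have hdeg : P.natDegree = n := by
    rw [hP, Polynomial.natDegree_prod_of_monic _ _ (fun j _ => Polynomial.monic_X_sub_C _)]; simp
  have hmon : P.Monic := by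
    rw [hP]; exact Polynomial.monic_prod_of_monic _ _ (fun j _ => Polynomial.monic_X_sub_C _)
  have hlead : P.coeff n = 1 := by
    have := hmon.coeff_natDegree
    rwa [hdeg] at this
  have h1 := Matrix.det_updateCol_sum A (Fin.last n) (fun k => P.coeff k)
  simp only [Fin.val_last, hlead, one_smul] at h1
  rw [← h1, Matrix.det_succ_column _ (Fin.last n), Fin.sum_univ_castSucc]
  have hroot : ∀ i : Fin n, ∑ k : Fin (n + 1), P.coeff k * (Y i) ^ (k : ℕ) = 0 := by
    intro i
    rw [Fin.sum_univ_eq_sum_range (fun k => P.coeff k * (Y i) ^ k) (n + 1),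
      ← Polynomial.eval_eq_sum_range' (by omega), hP, Polynomial.eval_prod]
    exact Finset.prod_eq_zero (Finset.mem_univ i) (by simp)
  rw [Finset.sum_eq_zero]
  · have hsub : ((A.updateCol (Fin.last n) (fun k => ∑ x : Fin (n + 1), P.coeff x • A k x)).submatrix
        (Fin.last n).succAbove (Fin.last n).succAbove) = Matrix.vandermonde Y := by
      ext i j
      simp [Matrix.vandermonde_apply, hA, Matrix.updateCol_apply]
    rw [hsub, Matrix.det_vandermonde]
    simp [hA]
    ring
  · intro i _
    simp [hA, hroot]

theorem laguerreC_pred (a : ℝ) (d : ℕ) (x : ℂ) :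
    laguerreC (a + 1) ((d : ℤ) - 1) x = - (Polynomial.derivative (lagPoly a d)).eval x := by
  rcases d with _ | d
  · simp [laguerreC, lagPoly_zero]
  · rw [lagPoly_deriv, show ((d + 1 : ℕ) : ℤ) - 1 = (d : ℤ) by push_cast; ring, laguerreC_eq]
    simp

theorem main_identity (m d : ℕ) (α : ℝ) (p q G : Polynomial ℂ)
    (hp : p = lagPoly (-α - 1) m) (hq : q = lagPoly (α + 1) d)
    (hG : G = Polynomial.X * (Polynomial.derivative p * q - p * Polynomial.derivative q)
      - Polynomial.C ((α : ℂ) + 1) * (p * q)) :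
    G - Polynomial.derivative G = Polynomial.C (-((α : ℂ) + d + 1 - m)) * (p * q) := by
  have h1 := lagPoly_ode (-α - 1) m
  have h2 := lagPoly_ode (α + 1) d
  rw [← hp] at h1
  rw [← hq] at h2
  subst hG
  simp only [Polynomial.derivative_sub, Polynomial.derivative_mul, Polynomial.derivative_X,
    Polynomial.derivative_C]
  simp only [Complex.ofReal_sub, Complex.ofReal_neg, Complex.ofReal_add, Complex.ofReal_one,
    map_sub, map_neg, map_add, map_one] at h1 h2 ⊢
  linear_combination (-q) * h1 + p * h2

end helpers

theorem stmt6 (m : ℕ) (α : ℝ) (hα : (m : ℝ) - 1 < α) (n : ℕ) (hmn : m ≤ n)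
    (y : Fin m → ℂ) (z : Fin (n - m) → ℂ)
    (hy : ∀ X : ℂ, laguerreC (-α - 1) (m : ℤ) X =
      ((-1 : ℂ) ^ m / (Nat.factorial m : ℂ)) * ∏ j, (X - y j))
    (hz : ∀ X : ℂ, laguerreC (α + 1) ((n : ℤ) - m) X =
      ((-1 : ℂ) ^ (n - m) / (Nat.factorial (n - m) : ℂ)) * ∏ j, (X - z j))
    (Y : Fin n → ℂ)
    (hY : Y = fun j => Fin.append y z (Fin.cast (show n = m + (n - m) by omega) j))
    (M : ℂ → Matrix (Fin (n + 1)) (Fin (n + 1)) ℂ)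
    (hM : ∀ w : ℂ, M w = Matrix.of fun (i k : Fin (n + 1)) =>
      if h : (i : ℕ) < n then (Y ⟨i, h⟩) ^ (k : ℕ)
      else (Nat.factorial (k : ℕ) : ℂ) * expPartial (k : ℕ) w) :
    (∀ w : ℂ,
      (Nat.factorial m : ℂ) * (Nat.factorial (n - m) : ℂ) *
          (∏ i : Fin n, ∏ j ∈ Finset.Ioi i, (Y j - Y i)) * XLagIIC m α n w =
        (-1 : ℂ) ^ (n + 1) * ((α : ℂ) + n + 1 - 2 * m) * (M w).det) ∧
      Function.Injective Y := by
  have hd : ((n : ℤ) - m) = ((n - m : ℕ) : ℤ) := by push_cast [hmn]; ring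
  have hp : lagPoly (-α - 1) m = Polynomial.C ((-1 : ℂ) ^ m / (Nat.factorial m : ℂ)) *
      ∏ j, (Polynomial.X - Polynomial.C (y j)) := by
    apply Polynomial.funext
    intro r
    rw [← laguerreC_eq, hy]
    simp [Polynomial.eval_prod]
  have hq : lagPoly (α + 1) (n - m) = Polynomial.C ((-1 : ℂ) ^ (n - m) / (Nat.factorial (n - m) : ℂ)) *
      ∏ j, (Polynomial.X - Polynomial.C (z j)) := by
    apply Polynomial.funext
    intro r
    rw [← laguerreC_eq, ← hd, hz]
    simp [Polynomial.eval_prod]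
  have hprod : ∏ j, (Polynomial.X - Polynomial.C (Y j)) =
      (∏ j, (Polynomial.X - Polynomial.C (y j))) * ∏ j, (Polynomial.X - Polynomial.C (z j)) := by
    rw [hY]
    refine (Fintype.prod_equiv (finCongr (show n = m + (n - m) by omega)) _
      (fun j => Polynomial.X - Polynomial.C (Fin.append y z j)) (fun j => rfl)).trans ?_
    rw [Fin.prod_univ_add]
    simp
  have hm0 : (Nat.factorial m : ℂ) ≠ 0 := by exact_mod_cast Nat.factorial_ne_zero m
  have hd0 : (Nat.factorial (n - m) : ℂ) ≠ 0 := by exact_mod_cast Nat.factorial_ne_zero (n - m)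
  have hpq : lagPoly (-α - 1) m * lagPoly (α + 1) (n - m)
      = Polynomial.C ((-1 : ℂ) ^ n / ((Nat.factorial m : ℂ) * (Nat.factorial (n - m) : ℂ))) *
        ∏ j, (Polynomial.X - Polynomial.C (Y j)) := by
    have e : (-1 : ℂ) ^ n = (-1) ^ m * (-1) ^ (n - m) := by rw [← pow_add]; congr 1; omega
    rw [hp, hq, hprod, e, mul_div_mul_comm, Polynomial.C_mul]
    ring
  have hm1 : (0 : ℝ) ≤ m := Nat.cast_nonneg m
  constructor
  · intro w
    obtain ⟨G, hG⟩ : ∃ G : Polynomial ℂ, G = Polynomial.X *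
      (Polynomial.derivative (lagPoly (-α - 1) m) * lagPoly (α + 1) (n - m)
        - lagPoly (-α - 1) m * Polynomial.derivative (lagPoly (α + 1) (n - m)))
      - Polynomial.C ((α : ℂ) + 1) * (lagPoly (-α - 1) m * lagPoly (α + 1) (n - m)) := ⟨_, rfl⟩
    have hid := main_identity m (n - m) α _ _ G rfl rfl hG
    have hX : XLagIIC m α n w = G.eval w := by
      have hs := congrArg (Polynomial.eval w) (lagPoly_shift (-α - 1) m)
      have e2 : -α - 1 - 1 = -α - 2 := by ring
      have e3 : α + 2 = α + 1 + 1 := by ring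
      rw [e2] at hs
      simp only [Polynomial.eval_mul, Polynomial.eval_add, Polynomial.eval_C,
        Polynomial.eval_X] at hs
      push_cast at hs
      rw [XLagIIC, hd, e3, laguerreC_pred, laguerreC_eq, laguerreC_eq, laguerreC_eq, hG]
      simp only [Polynomial.eval_mul, Polynomial.eval_sub, Polynomial.eval_C,
        Polynomial.eval_X]
      linear_combination (Polynomial.eval w (lagPoly (α + 1) (n - m))) * hs
    have hT := expFun_sub_deriv w G
    have hdeg : (∏ j, (Polynomial.X - Polynomial.C (Y j))).natDegree < n + 1 := by
      rw [Polynomial.natDegree_prod_of_monic _ _ (fun j _ => Polynomial.monic_X_sub_C _)]; simp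
    rw [hid, hpq, ← Polynomial.smul_eq_C_mul, ← Polynomial.smul_eq_C_mul, map_smul, map_smul,
      expFun_eq_sum w (n + 1) _ hdeg] at hT
    rw [hM, det_eq n Y (fun k => (Nat.factorial k : ℂ) * expPartial k w) _ rfl, hX, ← hT]
    simp only [smul_eq_mul]
    rw [Nat.cast_sub hmn, pow_succ]
    field_simp
    ring
  · have h1 : (lagPoly (-α - 1) m).Separable := by
      apply lagPoly_separable
      have := lagPoly_ne_nonneg (-α - 1) m (by linarith) 0 le_rfl
      simpa using this
    have h2 : (lagPoly (α + 1) (n - m)).Separable := by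
      apply lagPoly_separable
      have := lagPoly_ne_nonpos (α + 1) (by linarith) (n - m) 0 le_rfl
      simpa using this
    have h3 : IsCoprime (lagPoly (-α - 1) m) (lagPoly (α + 1) (n - m)) := by
      apply coprime_of_no_root
      intro r hr hr'
      have him := lagPoly_root_im (α + 1) (by linarith) r _ hr'
      have hre : r = (r.re : ℂ) := by apply Complex.ext <;> simp [him]
      rw [hre] at hr hr'
      rcases le_total r.re 0 with h | h
      · exact lagPoly_ne_nonpos (α + 1) (by linarith) _ _ h hr'
      · exact lagPoly_ne_nonneg (-α - 1) m (by linarith) _ h hr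
    have h4 := h1.mul h2 h3
    rw [hpq] at h4
    exact Polynomial.separable_prod_X_sub_C_iff.mp h4.of_mul_right
end
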